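/- arXiv:2304.08507 — 4 statements merged into one kernel-verified Lean document; each statement's English description precedes it below -/
import Mathlib

section
/- Let X be a nonempty set, b ≥ 1, ρ ≥ 0, and let d be a b-suprametric on X such that (X,d) is complete. Let f : X → X and suppose there exists a Matkowski function ψ such that d(f x, f y) ≤ ψ(d(x,y)) for all x, y ∈ X. Then f has a unique fixed point x⋆ in X, and for every x₀ ∈ X the Picard iterates satisfy d(fⁿ x₀, x⋆) → 0 as n → ∞. -/
/-!
Since `b * (s + t) + ρ * s * t` tends to `0` as `s, t → 0`, the distance `d x y` is smaller than
a given `ε > 0` as soon as `d x z` and `d z y` are smaller than a suitable `δ`. Choose `k` with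
`ψ^[k] ε < δ`. Any two orbits of `f` approach each other, so far enough along the orbit of `x₀`
a point `x` satisfies `d x (f^[k] x) < δ`. Then `f^[k]` maps the `ε`-ball around `x` into itself,
and the whole orbit of `x` stays in this ball as soon as its first `k` points do. Hence Picard
iterates are Cauchy.
-/

open Filter Set
open scoped Topology

/-- Matkowski's comparison functions on `[0, ∞)`, encoded as functions on `ℝ` whose values at
negative arguments are irrelevant. -/
structure IsMatkowski (ψ : ℝ → ℝ) : Prop where
  nonneg : ∀ t, 0 ≤ t → 0 ≤ ψ t
  monotoneOn : MonotoneOn ψ (Ici 0)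
  tendsto_iterate : ∀ t, 0 < t → Tendsto (fun n => ψ^[n] t) atTop (𝓝 0)

/-- Semimetrics that are regular in the sense of Bessenyei and Páles: the optimal bound for
`d x y` in terms of `d x z` and `d z y` is continuous at the origin. This is stated in `ε`-`δ`
form to avoid an extended-real-valued supremum. -/
structure IsRegularSemimetric {X : Type*} (d : X → X → ℝ) : Prop where
  nonneg : ∀ x y, 0 ≤ d x y
  eq_zero_iff : ∀ x y, d x y = 0 ↔ x = y
  symm : ∀ x y, d x y = d y x
  regular : ∀ ε > 0, ∃ δ > 0, ∀ x y z, d x z < δ → d z y < δ → d x y < ε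

/-- Sequential completeness with respect to `d`, where the Cauchy condition is convergence of
the double sequence `d (u p) (u q)` to `0`. -/
def IsCompleteSemimetric {X : Type*} (d : X → X → ℝ) : Prop :=
  ∀ u : ℕ → X, Tendsto (fun pq : ℕ × ℕ => d (u pq.1) (u pq.2)) atTop (𝓝 0) →
    ∃ x : X, Tendsto (fun n => d (u n) x) atTop (𝓝 0)

namespace IsMatkowski

variable {ψ : ℝ → ℝ} {t : ℝ}

theorem map_lt_self (hψ : IsMatkowski ψ) (ht : 0 < t) : ψ t < t := by
  by_contra! hle
  have hmaps : MapsTo ψ (Ici t) (Ici t) := fun s hs =>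
    hle.trans (hψ.monotoneOn ht.le (ht.le.trans hs) hs)
  have : t ≤ 0 := ge_of_tendsto' (hψ.tendsto_iterate t ht) fun n =>
    hmaps.iterate n self_mem_Ici
  exact this.not_gt ht

theorem map_zero (hψ : IsMatkowski ψ) : ψ 0 = 0 := by
  refine le_antisymm (not_lt.1 fun hpos => ?_) (hψ.nonneg 0 le_rfl)
  exact (hψ.map_lt_self hpos).not_ge (hψ.monotoneOn self_mem_Ici hpos.le hpos.le)

theorem map_le_self (hψ : IsMatkowski ψ) (ht : 0 ≤ t) : ψ t ≤ t := by
  rcases ht.eq_or_lt with rfl | hpos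
  · exact hψ.map_zero.le
  · exact (hψ.map_lt_self hpos).le

theorem tendsto_iterate_of_nonneg (hψ : IsMatkowski ψ) (ht : 0 ≤ t) :
    Tendsto (fun n => ψ^[n] t) atTop (𝓝 0) := by
  rcases ht.eq_or_lt with rfl | hpos
  · simp only [Function.iterate_fixed hψ.map_zero, tendsto_const_nhds]
  · exact hψ.tendsto_iterate t hpos

end IsMatkowski

theorem iterate_mem_of_mapsTo_iterate {α : Type*} {f : α → α} {s : Set α} {k : ℕ} {x : α}
    (hk : 0 < k) (hmaps : MapsTo f^[k] s s) (hmem : ∀ i < k, f^[i] x ∈ s) (m : ℕ) :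
    f^[m] x ∈ s := by
  rw [← Nat.div_add_mod m k, Function.iterate_add_apply, Function.iterate_mul]
  exact hmaps.iterate _ (hmem _ (m.mod_lt hk))

section Contraction

variable {X : Type*} {d : X → X → ℝ} {f : X → X} {ψ : ℝ → ℝ}

theorem iterate_le_iterate_of_contraction (hd : ∀ x y, 0 ≤ d x y)
    (hψ : MonotoneOn ψ (Ici 0)) (hf : ∀ x y, d (f x) (f y) ≤ ψ (d x y)) {x y : X} {t : ℝ}
    (hxy : d x y ≤ t) (n : ℕ) : d (f^[n] x) (f^[n] y) ≤ ψ^[n] t := by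
  induction n with
  | zero => exact hxy
  | succ n ih =>
    simp only [Function.iterate_succ_apply']
    exact (hf _ _).trans (hψ (hd _ _) ((hd _ _).trans ih) ih)

theorem tendsto_iterate_of_contraction (hd : ∀ x y, 0 ≤ d x y) (hψ : IsMatkowski ψ)
    (hf : ∀ x y, d (f x) (f y) ≤ ψ (d x y)) (x y : X) :
    Tendsto (fun n => d (f^[n] x) (f^[n] y)) atTop (𝓝 0) :=
  squeeze_zero (fun _ => hd _ _)
    (fun n => iterate_le_iterate_of_contraction hd hψ.monotoneOn hf le_rfl n)
    (hψ.tendsto_iterate_of_nonneg (hd x y))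

theorem tendsto_map_of_contraction (hd : ∀ x y, 0 ≤ d x y) (hψ : IsMatkowski ψ)
    (hf : ∀ x y, d (f x) (f y) ≤ ψ (d x y)) {u : ℕ → X} {x : X}
    (hu : Tendsto (fun n => d (u n) x) atTop (𝓝 0)) :
    Tendsto (fun n => d (f (u n)) (f x)) atTop (𝓝 0) :=
  squeeze_zero (fun _ => hd _ _) (fun _ => (hf _ _).trans (hψ.map_le_self (hd _ _))) hu

end Contraction

namespace IsRegularSemimetric

variable {X : Type*} {d : X → X → ℝ}

theorem of_triangle_function (hnonneg : ∀ x y, 0 ≤ d x y)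
    (heq : ∀ x y, d x y = 0 ↔ x = y) (hsymm : ∀ x y, d x y = d y x) {Φ : ℝ × ℝ → ℝ}
    (hΦ : Tendsto Φ (𝓝 0) (𝓝 0)) (htri : ∀ x y z, d x y ≤ Φ (d x z, d z y)) :
    IsRegularSemimetric d where
  nonneg := hnonneg
  eq_zero_iff := heq
  symm := hsymm
  regular ε hε := by
    obtain ⟨δ, hδ, hball⟩ := Metric.eventually_nhds_iff.1 (hΦ.eventually_lt_const hε)
    refine ⟨δ, hδ, fun x y z hxz hzy => (htri x y z).trans_lt (hball ?_)⟩
    simpa [Prod.dist_eq, abs_of_nonneg, hnonneg] using ⟨hxz, hzy⟩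

theorem of_suprametric (hnonneg : ∀ x y, 0 ≤ d x y) (heq : ∀ x y, d x y = 0 ↔ x = y)
    (hsymm : ∀ x y, d x y = d y x) {b ρ : ℝ}
    (htri : ∀ x y z, d x y ≤ b * (d x z + d z y) + ρ * d x z * d z y) :
    IsRegularSemimetric d := by
  refine of_triangle_function (Φ := fun p => b * (p.1 + p.2) + ρ * p.1 * p.2)
    hnonneg heq hsymm (Continuous.tendsto' (by fun_prop) _ _ ?_) htri
  simp

theorem eq_of_tendsto (hd : IsRegularSemimetric d) {ι : Type*} {l : Filter ι} [l.NeBot]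
    {u : ι → X} {x y : X} (hx : Tendsto (fun i => d (u i) x) l (𝓝 0))
    (hy : Tendsto (fun i => d (u i) y) l (𝓝 0)) : x = y := by
  refine (hd.eq_zero_iff x y).1 (le_antisymm (le_of_forall_gt fun ε hε => ?_) (hd.nonneg x y))
  obtain ⟨δ, hδ, hreg⟩ := hd.regular ε hε
  obtain ⟨i, hix, hiy⟩ := ((hx.eventually_lt_const hδ).and (hy.eventually_lt_const hδ)).exists
  exact hreg x y (u i) (by rwa [hd.symm]) hiy

variable {f : X → X} {ψ : ℝ → ℝ}

theorem exists_forall_iterate_lt (hd : IsRegularSemimetric d) (hψ : IsMatkowski ψ)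
    (hf : ∀ x y, d (f x) (f y) ≤ ψ (d x y)) (x₀ : X) {ε : ℝ} (hε : 0 < ε) :
    ∃ N, ∀ n ≥ N, ∀ m, d (f^[n] x₀) (f^[m] (f^[n] x₀)) < ε := by
  obtain ⟨δ, hδ, hreg⟩ := hd.regular ε hε
  obtain ⟨k, hkδ, hk⟩ :=
    (((hψ.tendsto_iterate ε hε).eventually_lt_const hδ).and (eventually_gt_atTop 0)).exists
  have hsmall (i : ℕ) {η : ℝ} (hη : 0 < η) :
      ∀ᶠ n in atTop, d (f^[n] x₀) (f^[i] (f^[n] x₀)) < η := by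
    simpa only [← Function.iterate_add_apply, add_comm] using
      (tendsto_iterate_of_contraction hd.nonneg hψ hf x₀ (f^[i] x₀)).eventually_lt_const hη
  have hinit : ∀ᶠ n in atTop, ∀ i < k, d (f^[n] x₀) (f^[i] (f^[n] x₀)) < ε :=
    (finite_lt_nat k).eventually_all.2 fun i _ => hsmall i hε
  obtain ⟨N, hN⟩ := eventually_atTop.1 ((hsmall k hδ).and hinit)
  refine ⟨N, fun n hn => ?_⟩
  obtain ⟨hstep, hfirst⟩ := hN n hn
  have hball : MapsTo f^[k] {y | d (f^[n] x₀) y < ε} {y | d (f^[n] x₀) y < ε} := fun y hy =>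
    hreg _ _ _ hstep
      ((iterate_le_iterate_of_contraction hd.nonneg hψ.monotoneOn hf hy.le k).trans_lt hkδ)
  exact iterate_mem_of_mapsTo_iterate hk hball hfirst

theorem tendsto_picard_prod (hd : IsRegularSemimetric d) (hψ : IsMatkowski ψ)
    (hf : ∀ x y, d (f x) (f y) ≤ ψ (d x y)) (x₀ : X) :
    Tendsto (fun pq : ℕ × ℕ => d (f^[pq.1] x₀) (f^[pq.2] x₀)) atTop (𝓝 0) := by
  refine tendsto_order.2 ⟨fun a ha => .of_forall fun _ => ha.trans_le (hd.nonneg _ _),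
    fun ε hε => ?_⟩
  obtain ⟨N, hN⟩ := hd.exists_forall_iterate_lt hψ hf x₀ hε
  have hle {p q : ℕ} (hp : N ≤ p) (hpq : p ≤ q) : d (f^[p] x₀) (f^[q] x₀) < ε := by
    simpa only [← Function.iterate_add_apply, Nat.sub_add_cancel hpq] using hN p hp (q - p)
  filter_upwards [eventually_ge_atTop (N, N)] with ⟨p, q⟩ ⟨hp, hq⟩
  rcases le_total p q with hpq | hqp
  · exact hle hp hpq
  · exact (hd.symm _ _).trans_lt (hle hq hqp)

end IsRegularSemimetric

theorem b_suprametric_matkowski_fixed_point_general {X : Type*} [Nonempty X] {d : X → X → ℝ}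
    (hd : IsRegularSemimetric d) (hcomplete : IsCompleteSemimetric d) {f : X → X} {ψ : ℝ → ℝ}
    (hψ : IsMatkowski ψ) (hf : ∀ x y, d (f x) (f y) ≤ ψ (d x y)) :
    ∃ xs : X, f xs = xs ∧ (∀ y, f y = y → y = xs) ∧
      ∀ x₀ : X, Tendsto (fun n => d (f^[n] x₀) xs) atTop (𝓝 0) := by
  obtain ⟨x₁⟩ := ‹Nonempty X›
  obtain ⟨xs, hlim⟩ := hcomplete (fun n => f^[n] x₁) (hd.tendsto_picard_prod hψ hf x₁)
  have hfix : f xs = xs := by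
    have hmap := tendsto_map_of_contraction hd.nonneg hψ hf hlim
    simp only [← Function.iterate_succ_apply'] at hmap
    exact hd.eq_of_tendsto hmap (hlim.comp (tendsto_add_atTop_nat 1))
  have hattract (x₀ : X) : Tendsto (fun n => d (f^[n] x₀) xs) atTop (𝓝 0) := by
    simpa only [Function.iterate_fixed hfix] using
      tendsto_iterate_of_contraction hd.nonneg hψ hf x₀ xs
  refine ⟨xs, hfix, fun y hy => ?_, hattract⟩
  have hconst : Tendsto (fun _ : ℕ => d y xs) atTop (𝓝 0) := by
    simpa only [Function.iterate_fixed hy] using hattract y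
  exact (hd.eq_zero_iff y xs).1 (tendsto_nhds_unique tendsto_const_nhds hconst)

/-- **Theorem (main result).** Let `X` be a nonempty set, `b ≥ 1`, `ρ ≥ 0`, and `d` a
complete `b`-suprametric on `X`. If `f : X → X` satisfies `d (f x) (f y) ≤ ψ (d x y)`
for a Matkowski function `ψ`, then `f` has a unique fixed point and every Picard
iteration converges to it. -/
theorem b_suprametric_matkowski_fixed_point
    {X : Type*} [Nonempty X] (b ρ : ℝ) (hb : 1 ≤ b) (hρ : 0 ≤ ρ)
    (d : X → X → ℝ)
    (hd_nonneg : ∀ x y, 0 ≤ d x y)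
    (hd_eq : ∀ x y, d x y = 0 ↔ x = y)
    (hd_symm : ∀ x y, d x y = d y x)
    (hd_tri : ∀ x y z, d x y ≤ b * (d x z + d z y) + ρ * d x z * d z y)
    (hd_complete : ∀ u : ℕ → X,
      Filter.Tendsto (fun pq : ℕ × ℕ => d (u pq.1) (u pq.2)) Filter.atTop (nhds 0) →
      ∃ x : X, Filter.Tendsto (fun n => d (u n) x) Filter.atTop (nhds 0))
    (f : X → X) (ψ : ℝ → ℝ)
    (hψ_nonneg : ∀ t, 0 ≤ t → 0 ≤ ψ t)
    (hψ_mono : MonotoneOn ψ (Set.Ici 0))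
    (hψ_iter : ∀ t, 0 < t →
      Filter.Tendsto (fun n => ψ^[n] t) Filter.atTop (nhds 0))
    (h_contr : ∀ x y, d (f x) (f y) ≤ ψ (d x y)) :
    ∃ xs : X, f xs = xs ∧ (∀ y, f y = y → y = xs) ∧
      ∀ x₀ : X, Filter.Tendsto (fun n => d (f^[n] x₀) xs) Filter.atTop (nhds 0) :=
  b_suprametric_matkowski_fixed_point_general
    (.of_suprametric hd_nonneg hd_eq hd_symm hd_tri) hd_complete
    ⟨hψ_nonneg, hψ_mono, hψ_iter⟩ h_contr
end

section
/- Let X be a nonempty set, b ≥ 1, ρ ≥ 0, and let d be a b-suprametric on X such that (X,d) is complete.fLet f : X → X and suppose there exists c ∈ [0,1) such that d(f x, f y) ≤ c·d(x,y) for all x, y ∈ X. Then f has a unique fixed point x⋆ in X, and for every x₀ ∈ X the Picard iterates satisfy d(fⁿ x₀, x⋆) → 0 as n → ∞. -/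
/-!
A power `g = f^[N]` satisfies `d (g x) (g y) ≤ k * d x y` with `b * k < 1`. If `p` lies far enough
along a `g`-orbit, then `D = d p (g p)` is so small that `q = (b + ρ * D) * k < 1`, and the triangle
inequality through `g p` shows that `g` maps the ball of radius `b * D / (1 - q)` about `p` into
itself. The `g`-orbit of `p` is therefore bounded, hence Cauchy by contraction, and its limit is
the only fixed point of `g`. As `f` commutes with `g`, it fixes that point too.
-/

open Filter Function Set Topology

section

variable {X : Type*} {d : X → X → ℝ} {b ρ c k : ℝ} {f g : X → X} {p x y : X}

/-- Semimetrics: distance functions that need not satisfy any triangle inequality. -/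
structure IsSemimetric (d : X → X → ℝ) : Prop where
  nonneg : ∀ x y, 0 ≤ d x y
  eq_zero_iff : ∀ x y, d x y = 0 ↔ x = y
  symm : ∀ x y, d x y = d y x

/-- The `b`-suprametrics with constant `ρ`; the conditions on `b` and `ρ` are part of the notion. -/
structure IsSuprametric (b ρ : ℝ) (d : X → X → ℝ) : Prop extends IsSemimetric d where
  one_le : 1 ≤ b
  zero_le : 0 ≤ ρ
  triangle : ∀ x y z, d x y ≤ b * (d x z + d z y) + ρ * d x z * d z y

/-- Cauchy sequences with respect to `d`, which is not assumed to induce a uniform structure. -/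
def IsCauchySeqFor (d : X → X → ℝ) (u : ℕ → X) : Prop :=
  Tendsto (fun mn : ℕ × ℕ => d (u mn.1) (u mn.2)) atTop (𝓝 0)

/-- Sequential completeness with respect to `d`. -/
def IsSeqCompleteFor (d : X → X → ℝ) : Prop :=
  ∀ u : ℕ → X, IsCauchySeqFor d u → ∃ x, Tendsto (fun n => d (u n) x) atTop (𝓝 0)

/-- Lipschitz maps with respect to `d`. The constant is an arbitrary real number; contractions
are the case `0 ≤ c < 1`. -/
def IsLipschitzFor (d : X → X → ℝ) (c : ℝ) (f : X → X) : Prop :=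
  ∀ x y, d (f x) (f y) ≤ c * d x y

namespace IsLipschitzFor

theorem iterate (hf : IsLipschitzFor d c f) (hc : 0 ≤ c) (n : ℕ) :
    IsLipschitzFor d (c ^ n) f^[n] := by
  intro x y
  induction n with
  | zero => simp
  | succ n ih =>
    rw [iterate_succ_apply', iterate_succ_apply']
    calc d (f (f^[n] x)) (f (f^[n] y)) ≤ c * d (f^[n] x) (f^[n] y) := hf _ _
      _ ≤ c * (c ^ n * d x y) := by gcongr
      _ = c ^ (n + 1) * d x y := by ring

theorem tendsto_map (hf : IsLipschitzFor d c f) (hd : IsSemimetric d) {u : ℕ → X}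
    (hu : Tendsto (fun n => d (u n) x) atTop (𝓝 0)) :
    Tendsto (fun n => d (f (u n)) (f x)) atTop (𝓝 0) :=
  squeeze_zero (fun _ => hd.nonneg _ _) (fun _ => hf _ _) (by simpa using hu.const_mul c)

theorem tendsto_iterate (hf : IsLipschitzFor d c f) (hd : IsSemimetric d) (hc0 : 0 ≤ c)
    (hc1 : c < 1) (x y : X) : Tendsto (fun n => d (f^[n] x) (f^[n] y)) atTop (𝓝 0) :=
  squeeze_zero (fun _ => hd.nonneg _ _) (fun n => hf.iterate hc0 n x y)
    (by simpa using (tendsto_pow_atTop_nhds_zero_of_lt_one hc0 hc1).mul_const (d x y))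

theorem eq_of_isFixedPt (hf : IsLipschitzFor d c f) (hd : IsSemimetric d) (hc1 : c < 1)
    (hx : IsFixedPt f x) (hy : IsFixedPt f y) : x = y := by
  rw [← hd.eq_zero_iff]
  have h_le : d x y ≤ c * d x y := by simpa only [hx.eq, hy.eq] using hf x y
  nlinarith [hd.nonneg x y]

theorem isCauchySeqFor_iterate (hf : IsLipschitzFor d c f) (hd : IsSemimetric d) (hc0 : 0 ≤ c)
    (hc1 : c < 1) {R : ℝ} (hR : ∀ n, d p (f^[n] p) ≤ R) :
    IsCauchySeqFor d fun n => f^[n] p := by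
  have h_shift (m n : ℕ) : d (f^[m] p) (f^[m + n] p) ≤ c ^ m * R := by
    rw [iterate_add_apply]
    exact (hf.iterate hc0 m _ _).trans (by gcongr; exact hR n)
  have h_min (m n : ℕ) : d (f^[m] p) (f^[n] p) ≤ c ^ min m n * R := by
    rcases le_total m n with h | h
    · simpa [h] using h_shift m (n - m)
    · simpa [h, hd.symm] using h_shift n (m - n)
  have h_tendsto_min : Tendsto (fun mn : ℕ × ℕ => min mn.1 mn.2) atTop atTop := by
    rw [← prod_atTop_atTop_eq]
    exact tendsto_inf_atTop _ tendsto_fst tendsto_snd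
  have h_pow := (tendsto_pow_atTop_nhds_zero_of_lt_one hc0 hc1).comp h_tendsto_min
  exact squeeze_zero (fun _ => hd.nonneg _ _) (fun mn => h_min mn.1 mn.2)
    (by simpa using h_pow.mul_const R)

end IsLipschitzFor

namespace IsSuprametric

theorem eq_of_tendsto (hd : IsSuprametric b ρ d) {u : ℕ → X}
    (hx : Tendsto (fun n => d (u n) x) atTop (𝓝 0))
    (hy : Tendsto (fun n => d (u n) y) atTop (𝓝 0)) : x = y := by
  rw [← hd.eq_zero_iff]
  simp only [hd.symm _ x] at hx
  have h_bound := ((hx.add hy).const_mul b).add ((hx.const_mul ρ).mul hy)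
  have h_le := ge_of_tendsto' h_bound fun n => hd.triangle x y (u n)
  exact le_antisymm (by simpa using h_le) (hd.nonneg x y)

theorem mapsTo_closedBall (hd : IsSuprametric b ρ d) (hg : IsLipschitzFor d k g) (hk : 0 ≤ k)
    {R : ℝ} (hR : b * d p (g p) + (b + ρ * d p (g p)) * k * R ≤ R) :
    MapsTo g {y | d p y ≤ R} {y | d p y ≤ R} := by
  intro y (hy : d p y ≤ R)
  have h_coeff : 0 ≤ b + ρ * d p (g p) :=
    add_nonneg (zero_le_one.trans hd.one_le) (mul_nonneg hd.zero_le (hd.nonneg _ _))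
  have h_image : d (g p) (g y) ≤ k * R := (hg p y).trans (by gcongr)
  calc d p (g y)
      ≤ b * (d p (g p) + d (g p) (g y)) + ρ * d p (g p) * d (g p) (g y) := hd.triangle _ _ _
    _ = b * d p (g p) + (b + ρ * d p (g p)) * d (g p) (g y) := by ring
    _ ≤ b * d p (g p) + (b + ρ * d p (g p)) * (k * R) := by gcongr
    _ ≤ R := by rwa [← mul_assoc]

theorem dist_iterate_le (hd : IsSuprametric b ρ d) (hg : IsLipschitzFor d k g) (hk : 0 ≤ k)
    (hq : (b + ρ * d p (g p)) * k < 1) (n : ℕ) :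
    d p (g^[n] p) ≤ b * d p (g p) / (1 - (b + ρ * d p (g p)) * k) := by
  set q := (b + ρ * d p (g p)) * k
  set R := b * d p (g p) / (1 - q)
  have h_pos : 0 < 1 - q := sub_pos.2 hq
  have hR_nonneg : 0 ≤ R :=
    div_nonneg (mul_nonneg (zero_le_one.trans hd.one_le) (hd.nonneg _ _)) h_pos.le
  have hR : b * d p (g p) + q * R = R := by
    have : R * (1 - q) = b * d p (g p) := div_mul_cancel₀ _ h_pos.ne'
    linarith
  have h_self : d p p ≤ R := ((hd.eq_zero_iff p p).2 rfl).trans_le hR_nonneg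
  exact (hd.mapsTo_closedBall hg hk hR.le).iterate n h_self

theorem exists_isCauchySeqFor_iterate [Nonempty X] (hd : IsSuprametric b ρ d)
    (hg : IsLipschitzFor d k g) (hk : 0 ≤ k) (hbk : b * k < 1) :
    ∃ p, IsCauchySeqFor d fun n => g^[n] p := by
  obtain ⟨x⟩ := ‹Nonempty X›
  have hk1 : k < 1 := (le_mul_of_one_le_left hk hd.one_le).trans_lt hbk
  have h_step : Tendsto (fun n => d (g^[n] x) (g (g^[n] x))) atTop (𝓝 0) := by
    simpa only [← iterate_succ_apply, iterate_succ_apply'] using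
      hg.tendsto_iterate hd.toIsSemimetric hk hk1 x (g x)
  have h_coeff : Tendsto (fun n => (b + ρ * d (g^[n] x) (g (g^[n] x))) * k) atTop (𝓝 (b * k)) := by
    simpa using ((h_step.const_mul ρ).const_add b).mul_const k
  obtain ⟨M, hM⟩ := (h_coeff.eventually_lt_const hbk).exists
  exact ⟨g^[M] x,
    hg.isCauchySeqFor_iterate hd.toIsSemimetric hk hk1 (hd.dist_iterate_le hg hk hM)⟩

theorem isFixedPt_of_tendsto_iterate (hd : IsSuprametric b ρ d) (hg : IsLipschitzFor d k g)
    (hx : Tendsto (fun n => d (g^[n] p) x) atTop (𝓝 0)) : IsFixedPt g x := by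
  have h_image := hg.tendsto_map hd.toIsSemimetric hx
  simp only [← iterate_succ_apply' g] at h_image
  exact hd.eq_of_tendsto h_image (hx.comp (tendsto_add_atTop_nat 1))

theorem exists_isFixedPt [Nonempty X] (hd : IsSuprametric b ρ d) (hX : IsSeqCompleteFor d)
    (hf : IsLipschitzFor d c f) (hc0 : 0 ≤ c) (hc1 : c < 1) : ∃ x, IsFixedPt f x := by
  have h_pow := tendsto_pow_atTop_nhds_zero_of_lt_one hc0 hc1
  obtain ⟨N, hN⟩ : ∃ N : ℕ, b * c ^ N < 1 :=
    ((h_pow.const_mul b).eventually_lt_const (by simp)).exists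
  have hN1 : c ^ N < 1 := (le_mul_of_one_le_left (pow_nonneg hc0 N) hd.one_le).trans_lt hN
  have hfN := hf.iterate hc0 N
  obtain ⟨p, hp⟩ := hd.exists_isCauchySeqFor_iterate hfN (pow_nonneg hc0 N) hN
  obtain ⟨x, hx⟩ := hX _ hp
  have h_fixed : IsFixedPt f^[N] x := hd.isFixedPt_of_tendsto_iterate hfN hx
  have h_fixed_image : IsFixedPt f^[N] (f x) := h_fixed.map (Commute.self_iterate f N)
  exact ⟨x, hfN.eq_of_isFixedPt hd.toIsSemimetric hN1 h_fixed_image h_fixed⟩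

end IsSuprametric

end

/-- **Corollary.** Let `X` be a nonempty set, `b ≥ 1`, `ρ ≥ 0`, and `d` a complete
`b`-suprametric on `X`. If `f : X → X` satisfies `d (f x) (f y) ≤ c * d x y` for some
`c ∈ [0,1)`, then `f` has a unique fixed point and every Picard iteration converges
to it. -/
theorem b_suprametric_banach_fixed_point
    {X : Type*} [Nonempty X] (b ρ : ℝ) (hb : 1 ≤ b) (hρ : 0 ≤ ρ)
    (d : X → X → ℝ)
    (hd_nonneg : ∀ x y, 0 ≤ d x y)
    (hd_eq : ∀ x y, d x y = 0 ↔ x = y)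
    (hd_symm : ∀ x y, d x y = d y x)
    (hd_tri : ∀ x y z, d x y ≤ b * (d x z + d z y) + ρ * d x z * d z y)
    (hd_complete : ∀ u : ℕ → X,
      Filter.Tendsto (fun pq : ℕ × ℕ => d (u pq.1) (u pq.2)) Filter.atTop (nhds 0) →
      ∃ x : X, Filter.Tendsto (fun n => d (u n) x) Filter.atTop (nhds 0))
    (f : X → X) (c : ℝ) (hc0 : 0 ≤ c) (hc1 : c < 1)
    (h_contr : ∀ x y, d (f x) (f y) ≤ c * d x y) :
    ∃ xs : X, f xs = xs ∧ (∀ y, f y = y → y = xs) ∧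
      ∀ x₀ : X, Filter.Tendsto (fun n => d (f^[n] x₀) xs) Filter.atTop (nhds 0) := by
  have hd : IsSuprametric b ρ d := ⟨⟨hd_nonneg, hd_eq, hd_symm⟩, hb, hρ, hd_tri⟩
  have hf : IsLipschitzFor d c f := h_contr
  obtain ⟨xs, hxs⟩ := hd.exists_isFixedPt hd_complete hf hc0 hc1
  refine ⟨xs, hxs, fun y hy => hf.eq_of_isFixedPt hd.toIsSemimetric hc1 hy hxs, fun x₀ => ?_⟩
  simpa only [iterate_fixed hxs] using hf.tendsto_iterate hd.toIsSemimetric hc0 hc1 x₀ xs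
end

section
/- Let (X, d_m) be a metric space and let a > 0 and b ≥ 1 be real numbers. Define d(x,y) = d_m(x,y)·(a·d_m(x,y) + b) for all x,y ∈ X. Then d is a suprametric on X with constant ρ = 2a/b; in particular, d(x,y) ≤ d(x,z) + d(z,y) + (2a/b)·d(x,z)·d(z,y) for all x,y,z ∈ X, d(x,y) = 0 iff x = y, and d(x,y) = d(y,x). -/
/-!
For `φ r = r * (a * r + b)`, the defect of subadditivity is `φ (s + t) - φ s - φ t = 2 * a * s * t`,
while `b ^ 2 * (s * t) ≤ φ s * φ t`. Hence `φ ∘ dist` is a suprametric with constant `ρ` as soon as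
`2 * a ≤ ρ * b ^ 2`, and `ρ = 2 * a / b` qualifies when `1 ≤ b`.
-/

/-- A suprametric with constant `ρ`: a semimetric whose triangle inequality is relaxed by the
product term `ρ * d x z * d z y`. It is a predicate on a distance function, since the metric of the
space and the suprametric built from it live on the same type. -/
structure IsSuprametric_s14 {X : Type*} (ρ : ℝ) (d : X → X → ℝ) : Prop where
  const_nonneg : 0 ≤ ρ
  nonneg : ∀ x y, 0 ≤ d x y
  eq_zero_iff : ∀ x y, d x y = 0 ↔ x = y
  symm : ∀ x y, d x y = d y x
  triangle : ∀ x y z, d x y ≤ d x z + d z y + ρ * d x z * d z y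

theorem isSuprametric_comp_dist {X : Type*} [MetricSpace X] {ρ : ℝ} {φ : ℝ → ℝ} (hρ : 0 ≤ ρ)
    (hφ_mono : MonotoneOn φ (Set.Ici 0)) (hφ_zero : ∀ r, 0 ≤ r → (φ r = 0 ↔ r = 0))
    (hφ_add : ∀ s t, 0 ≤ s → 0 ≤ t → φ (s + t) ≤ φ s + φ t + ρ * φ s * φ t) :
    IsSuprametric_s14 ρ fun x y : X => φ (dist x y) where
  const_nonneg := hρ
  nonneg x y :=
    calc 0 = φ 0 := ((hφ_zero 0 le_rfl).2 rfl).symm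
      _ ≤ φ (dist x y) := hφ_mono Set.self_mem_Ici dist_nonneg dist_nonneg
  eq_zero_iff x y := (hφ_zero _ dist_nonneg).trans dist_eq_zero
  symm x y := by rw [dist_comm]
  triangle x y z :=
    calc φ (dist x y) ≤ φ (dist x z + dist z y) :=
          hφ_mono dist_nonneg (add_nonneg dist_nonneg dist_nonneg) (dist_triangle x z y)
      _ ≤ φ (dist x z) + φ (dist z y) + ρ * φ (dist x z) * φ (dist z y) :=
          hφ_add _ _ dist_nonneg dist_nonneg

theorem monotoneOn_mul_mul_add {R : Type*} [Semiring R] [PartialOrder R] [IsOrderedRing R]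
    {a b : R} (ha : 0 ≤ a) (hb : 0 ≤ b) :
    MonotoneOn (fun r => r * (a * r + b)) (Set.Ici 0) := by
  intro s (hs : 0 ≤ s) t (ht : 0 ≤ t) hst
  dsimp only
  gcongr

theorem mul_mul_add_eq_zero_iff {R : Type*} [Semiring R] [PartialOrder R] [IsOrderedRing R]
    [NoZeroDivisors R] {a b r : R} (ha : 0 ≤ a) (hb : 0 < b) (hr : 0 ≤ r) :
    r * (a * r + b) = 0 ↔ r = 0 :=
  mul_eq_zero_iff_right (hb.trans_le (le_add_of_nonneg_left (mul_nonneg ha hr))).ne'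

theorem add_mul_mul_add_le {R : Type*} [CommSemiring R] [PartialOrder R] [IsOrderedRing R]
    {a b ρ s t : R} (ha : 0 ≤ a) (hb : 0 ≤ b) (hρ : 0 ≤ ρ) (habρ : 2 * a ≤ ρ * b ^ 2)
    (hs : 0 ≤ s) (ht : 0 ≤ t) :
    (s + t) * (a * (s + t) + b) ≤
      s * (a * s + b) + t * (a * t + b) + ρ * (s * (a * s + b)) * (t * (a * t + b)) := by
  have hbs : b ≤ a * s + b := le_add_of_nonneg_left (mul_nonneg ha hs)
  have hbt : b ≤ a * t + b := le_add_of_nonneg_left (mul_nonneg ha ht)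
  calc (s + t) * (a * (s + t) + b)
      = s * (a * s + b) + t * (a * t + b) + 2 * a * (s * t) := by ring
    _ ≤ s * (a * s + b) + t * (a * t + b) + ρ * b ^ 2 * (s * t) := by gcongr
    _ = s * (a * s + b) + t * (a * t + b) + ρ * (s * b) * (t * b) := by ring
    _ ≤ s * (a * s + b) + t * (a * t + b) + ρ * (s * (a * s + b)) * (t * (a * t + b)) := by
      gcongr

theorem le_div_mul_sq {K : Type*} [DivisionRing K] [PartialOrder K] [IsOrderedRing K]
    {b c : K} (hc : 0 ≤ c) (hb : 1 ≤ b) : c ≤ c / b * b ^ 2 :=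
  calc c ≤ c * b := le_mul_of_one_le_right hc hb
    _ = c / b * b ^ 2 := by
      rw [sq, ← mul_assoc, div_mul_cancel₀ c (zero_lt_one.trans_le hb).ne']

theorem quadratic_of_metric_is_suprametric_general {X : Type*} [MetricSpace X] {a b ρ : ℝ}
    (ha : 0 ≤ a) (hb : 0 < b) (habρ : 2 * a ≤ ρ * b ^ 2) :
    IsSuprametric_s14 ρ fun x y : X => dist x y * (a * dist x y + b) := by
  have hρ : 0 ≤ ρ :=
    nonneg_of_mul_nonneg_left ((mul_nonneg zero_le_two ha).trans habρ) (pow_pos hb 2)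
  exact isSuprametric_comp_dist (φ := fun r => r * (a * r + b)) hρ
    (monotoneOn_mul_mul_add ha hb.le)
    (fun _ hr => mul_mul_add_eq_zero_iff ha hb hr)
    (fun _ _ hs ht => add_mul_mul_add_le ha hb.le hρ habρ hs ht)

/-- **Example.** If `(X, d_m)` is a metric space, `a > 0` and `b ≥ 1`, then
`d (x, y) = d_m (x, y) * (a * d_m (x, y) + b)` is a suprametric on `X` with
constant `ρ = 2 a / b`. -/
theorem quadratic_of_metric_is_suprametric
    {X : Type*} [MetricSpace X] (a b : ℝ) (ha : 0 < a) (hb : 1 ≤ b) :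
    (∀ x y z : X,
        dist x y * (a * dist x y + b) ≤
          dist x z * (a * dist x z + b) + dist z y * (a * dist z y + b) +
            (2 * a / b) * (dist x z * (a * dist x z + b)) *
              (dist z y * (a * dist z y + b))) ∧
    (∀ x y : X, dist x y * (a * dist x y + b) = 0 ↔ x = y) ∧
    (∀ x y : X, dist x y * (a * dist x y + b) = dist y x * (a * dist y x + b)) := by
  have h := quadratic_of_metric_is_suprametric_general (X := X) ha.le
    (zero_lt_one.trans_le hb) (le_div_mul_sq (mul_nonneg zero_le_two ha.le) hb)
  exact ⟨h.triangle, h.eq_zero_iff, h.symm⟩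
end

section
/- Let 0 < p < 1 and for sequences x, y ∈ ℓ_p(ℝ) set e(x,y) = (∑ₙ |xₙ − yₙ|^p)^{1/p} and d(x,y) = e(x,y)·(e(x,y) + 1). Then d is a b-suprametric on ℓ_p(ℝ) with constants b = 4^{1/p} and ρ = 8^{1/p}; in particular, d(x,y) ≤ 4^{1/p}·(d(x,z) + d(z,y)) + 8^{1/p}·d(x,z)·d(z,y) for all x,y,z ∈ ℓ_p(ℝ), d(x,y) = 0 iff x = y, and d(x,y) = d(y,x). -/
/-!
Subadditivity of `t ↦ t ^ p` for `p ≤ 1` makes `f ↦ ‖f‖ ^ p` subadditive on `ℓ_p`, and convexity of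
`t ↦ t ^ (1 / p)` turns this into `‖f + g‖ ≤ 2 ^ (1 / p - 1) * (‖f‖ + ‖g‖)`. Squaring a `b`-metric
inequality `e x y ≤ b * (e x z + e z y)` produces the mixed term `2 * b ^ 2 * e x z * e z y`, which
the product term of a `b`-suprametric absorbs because `e ≤ e * (e + 1)`.
-/

open scoped ENNReal

/-- A `b`-suprametric on `X`: a semimetric whose triangle inequality is relaxed by the factor `b`
and the product term with coefficient `ρ`. A `b`-metric is the case `ρ = 0`. -/
structure IsBSuprametric {X : Type*} (b ρ : ℝ) (d : X → X → ℝ) : Prop where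
  one_le : 1 ≤ b
  coeff_nonneg : 0 ≤ ρ
  nonneg : ∀ x y, 0 ≤ d x y
  eq_zero_iff : ∀ x y, d x y = 0 ↔ x = y
  symm : ∀ x y, d x y = d y x
  triangle : ∀ x y z, d x y ≤ b * (d x z + d z y) + ρ * d x z * d z y

namespace IsBSuprametric

variable {X : Type*} {b b' ρ ρ' : ℝ} {d : X → X → ℝ}

theorem mono (h : IsBSuprametric b ρ d) (hb : b ≤ b') (hρ : ρ ≤ ρ') : IsBSuprametric b' ρ' d where
  one_le := h.one_le.trans hb
  coeff_nonneg := h.coeff_nonneg.trans hρ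
  nonneg := h.nonneg
  eq_zero_iff := h.eq_zero_iff
  symm := h.symm
  triangle x y z := by
    have hxz := h.nonneg x z
    have hzy := h.nonneg z y
    exact (h.triangle x y z).trans (by gcongr)

theorem mul_add_one (h : IsBSuprametric b ρ d) :
    IsBSuprametric (b ^ 2) (b ^ 2 + (b + ρ) ^ 2 + ρ) (fun x y ↦ d x y * (d x y + 1)) where
  one_le := one_le_pow₀ h.one_le
  coeff_nonneg := by have := h.coeff_nonneg; positivity
  nonneg x y := by have := h.nonneg x y; positivity
  eq_zero_iff x y := by
    have hne : d x y + 1 ≠ 0 := by linarith [h.nonneg x y]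
    rw [mul_eq_zero, or_iff_left hne, h.eq_zero_iff]
  symm x y := by rw [h.symm]
  triangle x y z := by
    have hb := h.one_le
    have hρ := h.coeff_nonneg
    have hxy := h.nonneg x y
    have htri := h.triangle x y z
    have hu := h.nonneg x z
    have hv := h.nonneg z y
    set u := d x z
    set v := d z y
    have hlin : 0 ≤ (b ^ 2 - b) * (u + v) :=
      mul_nonneg (by nlinarith) (by positivity)
    have hmixed : 0 ≤ u * v * ((2 * b ^ 2 + ρ ^ 2 + ρ) * (u + v) +
        (2 * b ^ 2 + 2 * b * ρ + ρ) * (u * v) + (2 * b * ρ + ρ ^ 2)) := by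
      positivity
    calc d x y * (d x y + 1)
        ≤ (b * (u + v) + ρ * u * v) * (b * (u + v) + ρ * u * v + 1) := by gcongr
      _ ≤ b ^ 2 * (u * (u + 1) + v * (v + 1)) +
          (b ^ 2 + (b + ρ) ^ 2 + ρ) * (u * (u + 1)) * (v * (v + 1)) := by
        linear_combination hlin + hmixed

end IsBSuprametric

section lp

variable {ι : Type*} {E : ι → Type*} [∀ i, NormedAddCommGroup (E i)] {p : ℝ≥0∞}

theorem lp_norm_add_rpow_le (hp0 : 0 < p.toReal) (hp1 : p.toReal ≤ 1) (f g : lp E p) :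
    ‖f + g‖ ^ p.toReal ≤ ‖f‖ ^ p.toReal + ‖g‖ ^ p.toReal := by
  refine hasSum_le (fun i ↦ ?_) (lp.hasSum_norm hp0 (f + g))
    ((lp.hasSum_norm hp0 f).add (lp.hasSum_norm hp0 g))
  calc ‖f i + g i‖ ^ p.toReal
      ≤ (‖f i‖ + ‖g i‖) ^ p.toReal := by gcongr; exact norm_add_le _ _
    _ ≤ ‖f i‖ ^ p.toReal + ‖g i‖ ^ p.toReal :=
      Real.rpow_add_le_add_rpow (norm_nonneg _) (norm_nonneg _) hp0.le hp1

theorem lp_norm_add_le (hp0 : 0 < p.toReal) (hp1 : p.toReal ≤ 1) (f g : lp E p) :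
    ‖f + g‖ ≤ 2 ^ (1 / p.toReal - 1) * (‖f‖ + ‖g‖) := by
  have norm_eq (h : lp E p) : ‖h‖ = (‖h‖ ^ p.toReal) ^ (1 / p.toReal) := by
    rw [one_div, Real.rpow_rpow_inv (lp.norm_nonneg' h) hp0.ne']
  have rpow_nonneg (h : lp E p) : 0 ≤ ‖h‖ ^ p.toReal := Real.rpow_nonneg (lp.norm_nonneg' h) _
  have convexity := NNReal.rpow_add_le_mul_rpow_add_rpow
    ⟨_, rpow_nonneg f⟩ ⟨_, rpow_nonneg g⟩ (one_le_one_div hp0 hp1)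
  calc ‖f + g‖ = (‖f + g‖ ^ p.toReal) ^ (1 / p.toReal) := norm_eq _
    _ ≤ (‖f‖ ^ p.toReal + ‖g‖ ^ p.toReal) ^ (1 / p.toReal) :=
      Real.rpow_le_rpow (rpow_nonneg _) (lp_norm_add_rpow_le hp0 hp1 f g) (by positivity)
    _ ≤ 2 ^ (1 / p.toReal - 1) *
        ((‖f‖ ^ p.toReal) ^ (1 / p.toReal) + (‖g‖ ^ p.toReal) ^ (1 / p.toReal)) := by
      exact_mod_cast convexity
    _ = 2 ^ (1 / p.toReal - 1) * (‖f‖ + ‖g‖) := by rw [← norm_eq, ← norm_eq]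

theorem isBSuprametric_lp_norm_sub (hp0 : 0 < p.toReal) (hp1 : p.toReal ≤ 1) :
    IsBSuprametric (2 ^ (1 / p.toReal - 1)) 0 (fun f g : lp E p ↦ ‖f - g‖) where
  one_le := Real.one_le_rpow one_le_two (sub_nonneg.2 (one_le_one_div hp0 hp1))
  coeff_nonneg := le_rfl
  nonneg f g := lp.norm_nonneg' _
  eq_zero_iff f g := by rw [lp.norm_eq_zero_iff, sub_eq_zero]
  symm f g := by rw [← lp.norm_neg, neg_sub]
  triangle f g h := by
    simpa only [sub_add_sub_cancel, zero_mul, add_zero] using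
      lp_norm_add_le hp0 hp1 (f - h) (h - g)

theorem isBSuprametric_lp_norm_sub_mul_add_one (hp0 : 0 < p.toReal) (hp1 : p.toReal ≤ 1) :
    IsBSuprametric (4 ^ (1 / p.toReal - 1)) (2 * 4 ^ (1 / p.toReal - 1))
      (fun f g : lp E p ↦ ‖f - g‖ * (‖f - g‖ + 1)) := by
  have four_rpow (q : ℝ) : (4 : ℝ) ^ q = (2 ^ q) ^ 2 := by
    rw [sq, ← Real.mul_rpow zero_le_two zero_le_two]
    norm_num
  rw [four_rpow]
  exact (isBSuprametric_lp_norm_sub hp0 hp1).mul_add_one.mono le_rfl (by linarith)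

end lp

theorem two_mul_four_rpow_sub_one_le {q : ℝ} (hq : 0 ≤ q) :
    2 * (4 : ℝ) ^ (q - 1) ≤ 8 ^ q := by
  calc 2 * (4 : ℝ) ^ (q - 1) = 4 ^ q / 2 := by
        rw [Real.rpow_sub_one four_ne_zero]; ring
    _ ≤ 4 ^ q := half_le_self (by positivity)
    _ ≤ 8 ^ q := by gcongr; norm_num

theorem lp_quadratic_b_suprametric_general {ι : Type*} {E : ι → Type*}
    [∀ i, NormedAddCommGroup (E i)] (p : ℝ) (hp0 : 0 < p) (hp1 : p ≤ 1)
    (e : (∀ i, E i) → (∀ i, E i) → ℝ)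
    (he : ∀ x y, e x y = (∑' i, ‖x i - y i‖ ^ p) ^ (1 / p))
    (d : (∀ i, E i) → (∀ i, E i) → ℝ)
    (hd : ∀ x y, d x y = e x y * (e x y + 1)) :
    (∀ x y z : ∀ i, E i,
        Summable (fun i ↦ ‖x i‖ ^ p) → Summable (fun i ↦ ‖y i‖ ^ p) →
        Summable (fun i ↦ ‖z i‖ ^ p) →
        d x y ≤ (4 : ℝ) ^ (1 / p) * (d x z + d z y) +
          (8 : ℝ) ^ (1 / p) * d x z * d z y) ∧
    (∀ x y : ∀ i, E i,
        Summable (fun i ↦ ‖x i‖ ^ p) → Summable (fun i ↦ ‖y i‖ ^ p) →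
        (d x y = 0 ↔ x = y)) ∧
    (∀ x y : ∀ i, E i, d x y = d y x) := by
  obtain ⟨q, rfl⟩ : ∃ q : ℝ≥0∞, q.toReal = p := ⟨_, ENNReal.toReal_ofReal hp0.le⟩
  have hsupra : IsBSuprametric (4 ^ (1 / q.toReal)) (8 ^ (1 / q.toReal))
      (fun f g : lp E q ↦ ‖f - g‖ * (‖f - g‖ + 1)) :=
    (isBSuprametric_lp_norm_sub_mul_add_one hp0 hp1).mono
      (Real.rpow_le_rpow_of_exponent_le (by norm_num) (sub_le_self _ zero_le_one))
      (two_mul_four_rpow_sub_one_le (by positivity))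
  have hd_lp (f g : lp E q) : d f g = ‖f - g‖ * (‖f - g‖ + 1) := by
    rw [hd, he, lp.norm_eq_tsum_rpow hp0]
    rfl
  simp only [← hd_lp] at hsupra
  refine ⟨fun x y z hx hy hz ↦ ?_, fun x y hx hy ↦ ?_, fun x y ↦ ?_⟩
  · exact hsupra.triangle ⟨x, memℓp_gen hx⟩ ⟨y, memℓp_gen hy⟩ ⟨z, memℓp_gen hz⟩
  · exact (hsupra.eq_zero_iff ⟨x, memℓp_gen hx⟩ ⟨y, memℓp_gen hy⟩).trans Subtype.mk_eq_mk
  · simp only [hd, he, norm_sub_rev]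

/-- **Example.** For `0 < p < 1`, with `e (x, y) = (∑' n, |x n - y n| ^ p) ^ (1 / p)`
the `ℓ_p` `b`-metric, the distance `d (x, y) = e (x, y) * (e (x, y) + 1)` is a
`b`-suprametric on `ℓ_p (ℝ)` with `b = 4 ^ (1 / p)` and `ρ = 8 ^ (1 / p)`. -/
theorem lp_quadratic_b_suprametric (p : ℝ) (hp0 : 0 < p) (hp1 : p < 1)
    (e : (ℕ → ℝ) → (ℕ → ℝ) → ℝ)
    (he : ∀ x y : ℕ → ℝ, e x y = (∑' n, |x n - y n| ^ p) ^ (1 / p))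
    (d : (ℕ → ℝ) → (ℕ → ℝ) → ℝ)
    (hd : ∀ x y : ℕ → ℝ, d x y = e x y * (e x y + 1)) :
    (∀ x y z : ℕ → ℝ,
        Summable (fun n => |x n| ^ p) → Summable (fun n => |y n| ^ p) →
        Summable (fun n => |z n| ^ p) →
        d x y ≤ (4 : ℝ) ^ (1 / p) * (d x z + d z y) +
          (8 : ℝ) ^ (1 / p) * d x z * d z y) ∧
    (∀ x y : ℕ → ℝ,
        Summable (fun n => |x n| ^ p) → Summable (fun n => |y n| ^ p) →
        (d x y = 0 ↔ x = y)) ∧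
    (∀ x y : ℕ → ℝ, d x y = d y x) :=
  lp_quadratic_b_suprametric_general p hp0 hp1.le e he d hd
end
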